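/- Let Ω be a finite probability space, let S : Ω → 𝒮, W : Ω → 𝒲, and X : Ω → 𝒳 be random variables with 𝒮, 𝒲, 𝒳 finite and nonempty, and let f : 𝒲 × 𝒳 → 𝒬 be a function into a finite set 𝒬. If the pair (S, W) is independent of X, then H̃∞(S | f(W, X)) ≥ H̃∞(S | W). -/

import Mathlib

open Finset Real

/-- Probability of an event `E` under the weight function `p` on a finite sample space. -/
noncomputable def pr {Ω : Type*} [Fintype Ω] (p : Ω → ℝ) (E : Set Ω) : ℝ :=
  ∑ ω, E.indicator p ω

/-- `P[X = x]`. -/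
noncomputable def prEq {Ω 𝒳 : Type*} [Fintype Ω] (p : Ω → ℝ) (X : Ω → 𝒳) (x : 𝒳) : ℝ :=
  pr p {ω | X ω = x}

/-- `P[X = x | Y = y]`, taken to be `0` when `P[Y = y] = 0`. -/
noncomputable def condProb {Ω 𝒳 𝒴 : Type*} [Fintype Ω]
    (p : Ω → ℝ) (X : Ω → 𝒳) (x : 𝒳) (Y : Ω → 𝒴) (y : 𝒴) : ℝ :=
  if prEq p Y y = 0 then 0 else pr p {ω | X ω = x ∧ Y ω = y} / prEq p Y y

/-- Average min-entropy `H̃∞(X | Y)`. -/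
noncomputable def avgMinEntropy {Ω 𝒳 𝒴 : Type*} [Fintype Ω]
    [Fintype 𝒳] [Nonempty 𝒳] [Fintype 𝒴]
    (p : Ω → ℝ) (X : Ω → 𝒳) (Y : Ω → 𝒴) : ℝ :=
  - Real.logb 2 (∑ y : 𝒴, prEq p Y y *
      (Finset.univ.sup' Finset.univ_nonempty fun x : 𝒳 => condProb p X x Y y))

/-- Min-entropy `H∞(X)`. -/
noncomputable def minEntropy {Ω 𝒳 : Type*} [Fintype Ω] [Fintype 𝒳] [Nonempty 𝒳]
    (p : Ω → ℝ) (X : Ω → 𝒳) : ℝ :=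
  - Real.logb 2 (Finset.univ.sup' Finset.univ_nonempty fun x : 𝒳 => prEq p X x)

/-!
The average min-entropy of `S` given `Y` is `-log₂` of the probability that the best strategy
guesses `S` from `Y`. Processing the observation cannot raise this probability, since a maximum of
sums is at most the sum of the maxima. Adjoining to `W` an observation `X` that depends on `S` only
through `W` leaves it unchanged, because `P[X = x | W = w]` factors out of the maximum over `S` and
sums to `1`. Hence `H̃∞(S | f(W, X)) ≥ H̃∞(S | W, X) = H̃∞(S | W)`.
-/

section Probability

variable {Ω 𝒳 𝒴 𝒵 : Type*} [Fintype Ω] {p : Ω → ℝ}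

lemma pr_univ (p : Ω → ℝ) : pr p Set.univ = ∑ ω, p ω := by
  simp only [pr, Set.indicator_univ]

lemma pr_nonneg (hp : ∀ ω, 0 ≤ p ω) (E : Set Ω) : 0 ≤ pr p E :=
  sum_nonneg fun ω _ => Set.indicator_nonneg (fun ω _ => hp ω) ω

lemma pr_mono (hp : ∀ ω, 0 ≤ p ω) {E F : Set Ω} (hEF : E ⊆ F) : pr p E ≤ pr p F :=
  sum_le_sum fun ω _ => Set.indicator_le_indicator_of_subset hEF hp ω

lemma prEq_nonneg (hp : ∀ ω, 0 ≤ p ω) (X : Ω → 𝒳) (x : 𝒳) : 0 ≤ prEq p X x :=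
  pr_nonneg hp _

lemma le_prEq_apply (hp : ∀ ω, 0 ≤ p ω) (X : Ω → 𝒳) (ω : Ω) : p ω ≤ prEq p X (X ω) := by
  have hmem : ω ∈ {ω' | X ω' = X ω} := rfl
  calc p ω = Set.indicator {ω' | X ω' = X ω} p ω := (Set.indicator_of_mem hmem p).symm
    _ ≤ prEq p X (X ω) :=
      single_le_sum (fun ω' _ => Set.indicator_nonneg (fun ω _ => hp ω) ω') (mem_univ ω)

lemma sum_prEq (p : Ω → ℝ) (X : Ω → 𝒳) (s : Finset 𝒳) :
    ∑ x ∈ s, prEq p X x = pr p {ω | X ω ∈ s} := by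
  classical
  simp only [prEq, pr, Set.indicator_apply, Set.mem_ofPred_eq]
  rw [sum_comm]
  simp only [sum_ite_eq]

lemma sum_univ_prEq [Fintype 𝒳] (p : Ω → ℝ) (X : Ω → 𝒳) :
    ∑ x, prEq p X x = ∑ ω, p ω := by
  simp only [sum_prEq, mem_univ, Set.ofPred_true, pr_univ]

lemma prEq_prodMk_comp [Fintype 𝒴] [DecidableEq 𝒵] (p : Ω → ℝ) (X : Ω → 𝒳) (Y : Ω → 𝒴)
    (f : 𝒴 → 𝒵) (x : 𝒳) (z : 𝒵) :
    prEq p (fun ω => (X ω, f (Y ω))) (x, z) =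
      ∑ y with f y = z, prEq p (fun ω => (X ω, Y ω)) (x, y) := by
  have h := sum_prEq p (fun ω => (X ω, Y ω)) ({x} ×ˢ ({y | f y = z} : Finset 𝒴))
  rw [sum_product, sum_singleton] at h
  simpa only [prEq, Prod.mk.injEq, mem_product, mem_singleton, mem_filter_univ] using h.symm

lemma prEq_mul_condProb (hp : ∀ ω, 0 ≤ p ω) (X : Ω → 𝒳) (x : 𝒳) (Y : Ω → 𝒴) (y : 𝒴) :
    prEq p Y y * condProb p X x Y y = prEq p (fun ω => (X ω, Y ω)) (x, y) := by
  have hjoint : prEq p (fun ω => (X ω, Y ω)) (x, y) = pr p {ω | X ω = x ∧ Y ω = y} := by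
    simp only [prEq, Prod.mk.injEq]
  have hjoint_le : pr p {ω | X ω = x ∧ Y ω = y} ≤ prEq p Y y := pr_mono hp fun ω hω => hω.2
  rw [hjoint, condProb]
  split_ifs with hy
  · rw [mul_zero]
    exact le_antisymm (pr_nonneg hp _) (hjoint_le.trans_eq hy)
  · exact mul_div_cancel₀ _ hy

end Probability

section GuessProb

variable {Ω 𝒳 𝒴 : Type*} [Fintype Ω] [Fintype 𝒳] [Nonempty 𝒳] [Fintype 𝒴]

/-- The optimal probability `∑ y, max_x P[X = x, Y = y]` of guessing `X` from `Y`. Joint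
probabilities replace `P[Y = y] * P[X = x | Y = y]`, so null values of `Y` need no special case. -/
noncomputable def guessProb (p : Ω → ℝ) (X : Ω → 𝒳) (Y : Ω → 𝒴) : ℝ :=
  ∑ y, univ.sup' univ_nonempty fun x => prEq p (fun ω => (X ω, Y ω)) (x, y)

variable {p : Ω → ℝ}

lemma avgMinEntropy_eq_neg_logb_guessProb (hp : ∀ ω, 0 ≤ p ω) (X : Ω → 𝒳) (Y : Ω → 𝒴) :
    avgMinEntropy p X Y = -logb 2 (guessProb p X Y) := by
  simp only [avgMinEntropy, guessProb, mul₀_sup' (prEq_nonneg hp Y _), prEq_mul_condProb hp]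

lemma guessProb_pos (hp : ∀ ω, 0 ≤ p ω) (hpos : 0 < ∑ ω, p ω) (X : Ω → 𝒳) (Y : Ω → 𝒴) :
    0 < guessProb p X Y := by
  obtain ⟨ω, -, hω⟩ := (sum_pos_iff_of_nonneg fun ω _ => hp ω).1 hpos
  have hle (x : 𝒳) (y : 𝒴) : prEq p (fun ω => (X ω, Y ω)) (x, y) ≤
      univ.sup' univ_nonempty fun x => prEq p (fun ω => (X ω, Y ω)) (x, y) :=
    le_sup' (fun x => prEq p (fun ω => (X ω, Y ω)) (x, y)) (mem_univ x)
  refine sum_pos' (fun y _ => ?_) ⟨Y ω, mem_univ _, ?_⟩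
  · exact (prEq_nonneg hp _ _).trans (hle (Classical.arbitrary 𝒳) y)
  · exact (hω.trans_le (le_prEq_apply hp _ ω)).trans_le (hle (X ω) (Y ω))

lemma guessProb_comp_le {𝒵 : Type*} [Fintype 𝒵] (p : Ω → ℝ) (X : Ω → 𝒳) (Y : Ω → 𝒴)
    (f : 𝒴 → 𝒵) : guessProb p X (fun ω => f (Y ω)) ≤ guessProb p X Y := by
  classical
  calc guessProb p X (fun ω => f (Y ω))
      = ∑ z, univ.sup' univ_nonempty fun x =>
          ∑ y with f y = z, prEq p (fun ω => (X ω, Y ω)) (x, y) := by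
        simp only [guessProb, prEq_prodMk_comp]
    _ ≤ ∑ z, ∑ y with f y = z,
          univ.sup' univ_nonempty fun x => prEq p (fun ω => (X ω, Y ω)) (x, y) :=
        sum_le_sum fun z _ => sup'_le _ _ fun x _ => sum_le_sum fun y _ =>
          le_sup' (fun x => prEq p (fun ω => (X ω, Y ω)) (x, y)) (mem_univ x)
    _ = guessProb p X Y := sum_fiberwise _ _ _

lemma guessProb_prodMk_of_markov {𝒵 : Type*} [Fintype 𝒵] {X : Ω → 𝒳} {Y : Ω → 𝒴} {Z : Ω → 𝒵}
    {κ : 𝒴 → 𝒵 → ℝ} (hκ : ∀ y z, 0 ≤ κ y z) (hκsum : ∀ y, ∑ z, κ y z = 1)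
    (hmarkov : ∀ x y z, prEq p (fun ω => (X ω, Y ω, Z ω)) (x, y, z) =
      prEq p (fun ω => (X ω, Y ω)) (x, y) * κ y z) :
    guessProb p X (fun ω => (Y ω, Z ω)) = guessProb p X Y := by
  simp only [guessProb, Fintype.sum_prod_type, hmarkov, ← sup'_mul₀ (hκ _ _), ← mul_sum,
    hκsum, mul_one]

lemma avgMinEntropy_le_comp {𝒵 : Type*} [Fintype 𝒵] (hp : ∀ ω, 0 ≤ p ω) (hpos : 0 < ∑ ω, p ω)
    (X : Ω → 𝒳) (Y : Ω → 𝒴) (f : 𝒴 → 𝒵) :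
    avgMinEntropy p X Y ≤ avgMinEntropy p X (fun ω => f (Y ω)) := by
  simp only [avgMinEntropy_eq_neg_logb_guessProb hp]
  exact neg_le_neg <|
    logb_le_logb_of_le one_lt_two (guessProb_pos hp hpos _ _) (guessProb_comp_le p X Y f)

lemma avgMinEntropy_prodMk_of_markov {𝒵 : Type*} [Fintype 𝒵] (hp : ∀ ω, 0 ≤ p ω)
    {X : Ω → 𝒳} {Y : Ω → 𝒴} {Z : Ω → 𝒵}
    {κ : 𝒴 → 𝒵 → ℝ} (hκ : ∀ y z, 0 ≤ κ y z) (hκsum : ∀ y, ∑ z, κ y z = 1)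
    (hmarkov : ∀ x y z, prEq p (fun ω => (X ω, Y ω, Z ω)) (x, y, z) =
      prEq p (fun ω => (X ω, Y ω)) (x, y) * κ y z) :
    avgMinEntropy p X (fun ω => (Y ω, Z ω)) = avgMinEntropy p X Y := by
  simp only [avgMinEntropy_eq_neg_logb_guessProb hp,
    guessProb_prodMk_of_markov hκ hκsum hmarkov]

end GuessProb

/-- `S → W → X` is a Markov chain with transition probabilities `κ w x = P[X = x | W = w]`,
arbitrary where `P[W = w] = 0`. -/
theorem stmt_9_general {Ω 𝒮 𝒲 𝒳 𝒬 : Type*} [Fintype Ω] [Fintype 𝒮] [Nonempty 𝒮]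
    [Fintype 𝒲] [Fintype 𝒳] [Fintype 𝒬]
    (p : Ω → ℝ) (hp : ∀ ω, 0 ≤ p ω) (hsum : ∑ ω, p ω = 1)
    (S : Ω → 𝒮) (W : Ω → 𝒲) (X : Ω → 𝒳) (f : 𝒲 × 𝒳 → 𝒬)
    (κ : 𝒲 → 𝒳 → ℝ) (hκ : ∀ w x, 0 ≤ κ w x) (hκsum : ∀ w, ∑ x, κ w x = 1)
    (hmarkov : ∀ s w x, prEq p (fun ω => (S ω, W ω, X ω)) (s, w, x) =
      prEq p (fun ω => (S ω, W ω)) (s, w) * κ w x) :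
    avgMinEntropy p S W ≤ avgMinEntropy p S (fun ω => f (W ω, X ω)) :=
  calc avgMinEntropy p S W
      = avgMinEntropy p S (fun ω => (W ω, X ω)) :=
        (avgMinEntropy_prodMk_of_markov hp hκ hκsum hmarkov).symm
    _ ≤ avgMinEntropy p S (fun ω => f (W ω, X ω)) :=
        avgMinEntropy_le_comp hp (hsum ▸ one_pos) S (fun ω => (W ω, X ω)) f

theorem stmt_9 {Ω 𝒮 𝒲 𝒳 𝒬 : Type*} [Fintype Ω]
    [Fintype 𝒮] [Nonempty 𝒮] [Fintype 𝒲] [Nonempty 𝒲]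
    [Fintype 𝒳] [Nonempty 𝒳] [Fintype 𝒬]
    (p : Ω → ℝ) (hp : ∀ ω, 0 ≤ p ω) (hsum : ∑ ω, p ω = 1)
    (S : Ω → 𝒮) (W : Ω → 𝒲) (X : Ω → 𝒳) (f : 𝒲 × 𝒳 → 𝒬)
    (hindep : ∀ (s : 𝒮) (w : 𝒲) (x : 𝒳),
      prEq p (fun ω => (S ω, W ω, X ω)) (s, w, x) =
        prEq p (fun ω => (S ω, W ω)) (s, w) * prEq p X x) :
    avgMinEntropy p S (fun ω => f (W ω, X ω)) ≥ avgMinEntropy p S W :=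
  stmt_9_general p hp hsum S W X f (fun _ => prEq p X) (fun _ => prEq_nonneg hp X)
    (fun _ => (sum_univ_prEq p X).trans hsum) hindep
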